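/- arXiv:2212.07857 — 5 statements merged into one kernel-verified Lean document; each statement's English description precedes it below -/
import Mathlib

section
/- Let A = (α, β, q) be an octonionic Hermitian 2×2 matrix (α, β ∈ ℝ, q ∈ 𝕆). Then A is positive definite if and only if α > 0 and det A = α·β − |q|² > 0. (Octonionic Sylvester criterion, Proposition 5.7.) -/
noncomputable section

open scoped Quaternion

/-- The octonions, realized as pairs of quaternions (Cayley–Dickson). -/
abbrev Oct : Type := ℍ[ℝ] × ℍ[ℝ]

/-- Octonionic multiplication: (x,y)·(w,z) = (xw − z̄y, zx + yw̄). -/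
def omul (a b : Oct) : Oct :=
  (a.1 * b.1 - star b.2 * a.2, b.2 * a.1 + a.2 * star b.1)

/-- Octonionic conjugation. -/
def oconj (a : Oct) : Oct := (star a.1, -a.2)

/-- Real part of an octonion. -/
def oRe (a : Oct) : ℝ := a.1.re

/-- Squared norm |q|² = Re(q·q̄). -/
def onSq (a : Oct) : ℝ := oRe (omul a (oconj a))

/-- Octonionic Hermitian 2×2 matrix: (α, β, q) represents [[α, q],[q̄, β]]. -/
abbrev Herm : Type := ℝ × ℝ × Oct

/-- Determinant of an octonionic Hermitian 2×2 matrix. -/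
def detH (A : Herm) : ℝ := A.1 * A.2.1 - onSq A.2.2

/-- The quadratic form ξ ↦ Re(ξ*Aξ). -/
def qform (A : Herm) (ξ : Oct × Oct) : ℝ :=
  A.1 * onSq ξ.1 + A.2.1 * onSq ξ.2 + 2 * oRe (omul (oconj ξ.1) (omul A.2.2 ξ.2))

/-- Positive definiteness. -/
def PosDefH (A : Herm) : Prop := ∀ ξ : Oct × Oct, ξ ≠ 0 → 0 < qform A ξ

/-- Nonnegative definiteness. -/
def NonnegDefH (A : Herm) : Prop := ∀ ξ : Oct × Oct, 0 ≤ qform A ξ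

theorem onSq_eq (a : Oct) : onSq a = a.1.re^2 + a.1.imI^2 + a.1.imJ^2 + a.1.imK^2
    + a.2.re^2 + a.2.imI^2 + a.2.imJ^2 + a.2.imK^2 := by
  simp [onSq, oRe, omul, oconj]
  ring

theorem onSq_nonneg (a : Oct) : 0 ≤ onSq a := by
  rw [onSq_eq]; positivity

theorem onSq_pos (a : Oct) (h : a ≠ 0) : 0 < onSq a := by
  refine lt_of_le_of_ne (onSq_nonneg a) fun h0 => h ?_
  rw [onSq_eq] at h0
  obtain ⟨⟨x0, x1, x2, x3⟩, ⟨y0, y1, y2, y3⟩⟩ := a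
  simp only at h0
  have e0 : x0 = 0 := by apply pow_eq_zero_iff (two_ne_zero) |>.1; nlinarith [sq_nonneg x0, sq_nonneg x1, sq_nonneg x2, sq_nonneg x3, sq_nonneg y0, sq_nonneg y1, sq_nonneg y2, sq_nonneg y3]
  have e1 : x1 = 0 := by apply pow_eq_zero_iff (two_ne_zero) |>.1; nlinarith [sq_nonneg x0, sq_nonneg x1, sq_nonneg x2, sq_nonneg x3, sq_nonneg y0, sq_nonneg y1, sq_nonneg y2, sq_nonneg y3]
  have e2 : x2 = 0 := by apply pow_eq_zero_iff (two_ne_zero) |>.1; nlinarith [sq_nonneg x0, sq_nonneg x1, sq_nonneg x2, sq_nonneg x3, sq_nonneg y0, sq_nonneg y1, sq_nonneg y2, sq_nonneg y3]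
  have e3 : x3 = 0 := by apply pow_eq_zero_iff (two_ne_zero) |>.1; nlinarith [sq_nonneg x0, sq_nonneg x1, sq_nonneg x2, sq_nonneg x3, sq_nonneg y0, sq_nonneg y1, sq_nonneg y2, sq_nonneg y3]
  have f0 : y0 = 0 := by apply pow_eq_zero_iff (two_ne_zero) |>.1; nlinarith [sq_nonneg x0, sq_nonneg x1, sq_nonneg x2, sq_nonneg x3, sq_nonneg y0, sq_nonneg y1, sq_nonneg y2, sq_nonneg y3]
  have f1 : y1 = 0 := by apply pow_eq_zero_iff (two_ne_zero) |>.1; nlinarith [sq_nonneg x0, sq_nonneg x1, sq_nonneg x2, sq_nonneg x3, sq_nonneg y0, sq_nonneg y1, sq_nonneg y2, sq_nonneg y3]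
  have f2 : y2 = 0 := by apply pow_eq_zero_iff (two_ne_zero) |>.1; nlinarith [sq_nonneg x0, sq_nonneg x1, sq_nonneg x2, sq_nonneg x3, sq_nonneg y0, sq_nonneg y1, sq_nonneg y2, sq_nonneg y3]
  have f3 : y3 = 0 := by apply pow_eq_zero_iff (two_ne_zero) |>.1; nlinarith [sq_nonneg x0, sq_nonneg x1, sq_nonneg x2, sq_nonneg x3, sq_nonneg y0, sq_nonneg y1, sq_nonneg y2, sq_nonneg y3]
  subst e0 e1 e2 e3 f0 f1 f2 f3
  rfl

theorem onSq_mul (a b : Oct) : onSq (omul a b) = onSq a * onSq b := by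
  simp only [onSq_eq]
  simp [omul]
  ring

theorem onSq_add (r : ℝ) (a b : Oct) :
    onSq (r • a + b) = r^2 * onSq a + 2 * r * oRe (omul (oconj a) b) + onSq b := by
  simp only [onSq_eq]
  simp [omul, oRe, oconj]
  ring

theorem key (A : Herm) (ξ : Oct × Oct) :
    A.1 * qform A ξ = onSq (A.1 • ξ.1 + omul A.2.2 ξ.2) + detH A * onSq ξ.2 := by
  rw [onSq_add, onSq_mul, qform, detH]
  ring

/-- Octonionic Sylvester criterion (Proposition 5.7): an octonionic Hermitian 2×2
matrix is positive definite iff its upper-left entry and its determinant are positive. -/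
theorem sylvester_criterion (A : Herm) :
    PosDefH A ↔ 0 < A.1 ∧ 0 < detH A := by
  have hone : onSq ((1, 0) : Oct) = 1 := by simp [onSq_eq]
  have hzero : onSq (0 : Oct) = 0 := by simp [onSq_eq]
  constructor
  · intro h
    have h1 : 0 < A.1 := by
      have := h ((1, 0), 0) (by simp)
      simpa [qform, hone, hzero, omul, oRe] using this
    refine ⟨h1, ?_⟩
    have h2 := h (-(A.1⁻¹ • A.2.2), (1, 0)) (by simp)
    have h3 := key A (-(A.1⁻¹ • A.2.2), (1, 0))
    have h4 : A.1 • (-(A.1⁻¹ • A.2.2)) + omul A.2.2 (1, 0) = 0 := by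
      rw [smul_neg, smul_inv_smul₀ h1.ne']
      simp [omul]
    simp only [h4, hzero, hone] at h3
    have := mul_pos h1 h2
    linarith
  · rintro ⟨h1, h2⟩ ξ hξ
    refine pos_of_mul_pos_right (a := A.1) ?_ h1.le
    rw [key]
    by_cases h : ξ.2 = 0
    · have h5 : ξ.1 ≠ 0 := fun h' => hξ (Prod.ext h' h)
      have h6 : A.1 • ξ.1 + omul A.2.2 ξ.2 = A.1 • ξ.1 := by
        rw [h]; simp [omul]
      rw [h6, h, hzero]
      have := onSq_pos _ (smul_ne_zero h1.ne' h5)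
      linarith
    · have := mul_pos h2 (onSq_pos _ h)
      linarith [onSq_nonneg (A.1 • ξ.1 + omul A.2.2 ξ.2)]
end
end

section
/- For every traceless 2×2 matrix A with octonionic entries (a₁₁ + a₂₂ = 0) and every ξ ∈ 𝕆², the following identity of 2×2 octonionic matrices holds: (A*·ξ)·ξ* + ξ·(A*·ξ)* = A*·(ξ·ξ*) + (ξ·ξ*)·A. (The infinitesimal equivariance identity (20) proved in Lemma 6.7.) -/
noncomputable section

open scoped Quaternion

/-- 2×2 matrices with octonionic entries. -/
abbrev Omat : Type := Fin 2 → Fin 2 → Oct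

/-- Action of a 2×2 octonionic matrix on a column vector. -/
def matVec (A : Omat) (ξ : Fin 2 → Oct) : Fin 2 → Oct :=
  fun i => ∑ j, omul (A i j) (ξ j)

/-- Conjugate transpose A* of a 2×2 octonionic matrix. -/
def conjT (A : Omat) : Omat := fun i j => oconj (A j i)

/-- Product of 2×2 octonionic matrices. -/
def matMul (X Y : Omat) : Omat := fun i j => ∑ k, omul (X i k) (Y k j)

/-- The matrix ξ·η* with entries ξᵢ·conj(ηⱼ). -/
def outer (ξ η : Fin 2 → Oct) : Omat := fun i j => omul (ξ i) (oconj (η j))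

theorem omul_add_left (a b c : Oct) : omul (a + b) c = omul a c + omul b c := by
  simp only [omul, Prod.fst_add, Prod.snd_add, Prod.mk_add_mk, add_mul, mul_add]
  ext1 <;> dsimp only <;> abel

theorem omul_add_right (a b c : Oct) : omul a (b + c) = omul a b + omul a c := by
  simp only [omul, Prod.fst_add, Prod.snd_add, Prod.mk_add_mk, add_mul, mul_add, star_add]
  ext1 <;> dsimp only <;> abel

theorem oconj_add (a b : Oct) : oconj (a + b) = oconj a + oconj b := by
  simp only [oconj, Prod.fst_add, Prod.snd_add, Prod.mk_add_mk, star_add, neg_add]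

theorem oconj_omul (a b : Oct) : oconj (omul a b) = omul (oconj b) (oconj a) := by
  simp [omul, oconj]

theorem oconj_oconj (a : Oct) : oconj (oconj a) = a := by
  simp [oconj]

set_option maxHeartbeats 4000000 in
theorem alt_right (b x : Oct) :
    omul (omul b x) (oconj x) = omul b (omul x (oconj x)) := by
  obtain ⟨b0, b1⟩ := b
  obtain ⟨x0, x1⟩ := x
  ext <;> simp [omul, oconj] <;> ring

theorem alt_left (x a : Oct) :
    omul x (omul (oconj x) a) = omul (omul x (oconj x)) a := by
  have h := congrArg oconj (alt_right (oconj a) x)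
  simpa only [oconj_omul, oconj_oconj] using h

set_option maxHeartbeats 4000000 in
theorem assoc_off (a x y : Oct) :
    omul (omul (oconj a) x) (oconj y) + omul x (omul (oconj y) (-a))
      = omul (oconj a) (omul x (oconj y)) + omul (omul x (oconj y)) (-a) := by
  obtain ⟨a0, a1⟩ := a
  obtain ⟨x0, x1⟩ := x
  obtain ⟨y0, y1⟩ := y
  ext <;> simp [omul, oconj] <;> ring

set_option maxHeartbeats 4000000 in
theorem assoc_diag (a x y : Oct) :
    omul (omul (oconj a) y) (oconj x) + omul x (omul (oconj y) a)
      = omul (oconj a) (omul y (oconj x)) + omul (omul x (oconj y)) a := by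
  obtain ⟨a0, a1⟩ := a
  obtain ⟨x0, x1⟩ := x
  obtain ⟨y0, y1⟩ := y
  ext <;> simp [omul, oconj] <;> ring

/-- The infinitesimal equivariance identity (20) of Lemma 6.7: for a traceless
octonionic 2×2 matrix A and ξ ∈ 𝕆²,
(A*ξ)ξ* + ξ(A*ξ)* = A*(ξξ*) + (ξξ*)A. -/
theorem infinitesimal_equivariance (A : Omat) (hA : A 0 0 + A 1 1 = 0)
    (ξ : Fin 2 → Oct) :
    outer (matVec (conjT A) ξ) ξ + outer ξ (matVec (conjT A) ξ)
      = matMul (conjT A) (outer ξ ξ) + matMul (outer ξ ξ) A := by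
  have h1 : A 1 1 = -A 0 0 := (neg_eq_of_add_eq_zero_right hA).symm
  have h0 : A 0 0 = -A 1 1 := (neg_eq_of_add_eq_zero_left hA).symm
  have e01 := assoc_off (A 0 0) (ξ 0) (ξ 1)
  rw [← h1] at e01
  have e10 := assoc_off (A 1 1) (ξ 1) (ξ 0)
  rw [← h0] at e10
  have e00 := assoc_diag (A 1 0) (ξ 0) (ξ 1)
  have e11 := assoc_diag (A 0 1) (ξ 1) (ξ 0)
  funext i j
  simp only [Pi.add_apply, outer, matVec, matMul, conjT, Fin.sum_univ_two, omul_add_left,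
    omul_add_right, oconj_add, oconj_omul, oconj_oconj]
  fin_cases i <;> fin_cases j <;>
    simp only [Fin.zero_eta, Fin.mk_one, Fin.isValue, alt_left, alt_right]
  · rw [← sub_eq_zero] at e00 ⊢
    rw [← e00]
    abel
  · rw [← sub_eq_zero] at e01 ⊢
    rw [← e01]
    abel
  · rw [← sub_eq_zero] at e10 ⊢
    rw [← e10]
    abel
  · rw [← sub_eq_zero] at e11 ⊢
    rw [← e11]
    abel
end
end

section
/- For all octonions a, b, c ∈ 𝕆 one has (conj(a)·b)·c − b·(c·a) = conj(a)·(b·c) − (b·c)·a. (Identity (21) proved inside Lemma 6.7.) -/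
noncomputable section

open scoped Quaternion

set_option maxHeartbeats 4000000 in
/-- Identity (21) from the proof of Lemma 6.7:
(ā·b)·c − b·(c·a) = ā·(b·c) − (b·c)·a for all octonions a, b, c. -/
theorem conj_mul_identity (a b c : Oct) :
    omul (omul (oconj a) b) c - omul b (omul c a)
      = omul (oconj a) (omul b c) - omul (omul b c) a := by
  obtain ⟨a1, a2⟩ := a
  obtain ⟨b1, b2⟩ := b
  obtain ⟨c1, c2⟩ := c
  refine Prod.ext ?_ ?_ <;> apply Quaternion.ext <;>
    simp only [omul, oconj, Prod.fst_sub, Prod.snd_sub, Quaternion.re_sub, Quaternion.imI_sub,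
      Quaternion.imJ_sub, Quaternion.imK_sub, Quaternion.re_add, Quaternion.imI_add,
      Quaternion.imJ_add, Quaternion.imK_add, Quaternion.re_mul, Quaternion.imI_mul,
      Quaternion.imJ_mul, Quaternion.imK_mul, Quaternion.re_star, Quaternion.imI_star,
      Quaternion.imJ_star, Quaternion.imK_star, Quaternion.re_neg, Quaternion.imI_neg,
      Quaternion.imJ_neg, Quaternion.imK_neg] <;>
    ring
end
end

section
/- Let A = (α, β, q) be an octonionic Hermitian 2×2 matrix and let b : ℝ¹⁶ → ℝ be the quadratic form b(ξ) = Re(ξ*Aξ) under the identification ℝ¹⁶ ≅ 𝕆². Then the octonionic Hessian of b is constant and equal to 16·A, i.e. Δ₁b ≡ 16·α, Δ₂b ≡ 16·β, and b_{1̄2} ≡ 16·q. (Lemma 5.3, θ∘j = Id.) -/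
noncomputable section

open scoped Quaternion

/-- The point space ℝ¹⁶, with coordinates x_i^p, i = 1,2 and p = 0,…,7. -/
abbrev Pt : Type := Fin 2 → Fin 8 → ℝ

def qI : ℍ[ℝ] := ⟨0, 1, 0, 0⟩
def qJ : ℍ[ℝ] := ⟨0, 0, 1, 0⟩
def qK : ℍ[ℝ] := ⟨0, 0, 0, 1⟩

/-- The standard real basis e₀ = 1, e₁, …, e₇ of the octonions. -/
def e : Fin 8 → Oct :=
  ![((1 : ℍ[ℝ]), 0), (qI, 0), (qJ, 0), (qK, 0),
    (0, (1 : ℍ[ℝ])), (0, qI), (0, qJ), (0, qK)]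

/-- The coordinate unit vector of the coordinate x_i^p. -/
def uvec (i : Fin 2) (p : Fin 8) : Pt := Pi.single i (Pi.single p 1)

/-- Partial derivative ∂f/∂x_i^p of a real-valued function on ℝ¹⁶. -/
def pd (i : Fin 2) (p : Fin 8) (f : Pt → ℝ) : Pt → ℝ :=
  fun x => fderiv ℝ f x (uvec i p)

/-- The entry f_{ī j} = Σ_{p,q} e_p·(∂²f/∂x_i^p∂x_j^q)·conj(e_q) of the octonionic Hessian. -/
def hessEntry (f : Pt → ℝ) (i j : Fin 2) (x : Pt) : Oct :=
  ∑ p, ∑ q, pd i p (pd j q f) x • omul (e p) (oconj (e q))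

/-- The Laplacian Δᵢ = Σ_p ∂²/∂(x_i^p)² in the i-th octonionic variable. -/
def lap (i : Fin 2) (f : Pt → ℝ) (x : Pt) : ℝ := ∑ p, pd i p (pd i p f) x

/-- The identification ℝ¹⁶ ≅ 𝕆². -/
def toO2 (x : Pt) : Oct × Oct := (∑ p, x 0 p • e p, ∑ p, x 1 p • e p)

/-- The mixed coefficient Re(conj(e_p)·(a·e_q)). -/
def cf (a : Oct) (p q : Fin 8) : ℝ := oRe (omul (oconj (e p)) (omul a (e q)))

/-- The general quadratic polynomial the form expands to. -/
def FF (α β : ℝ) (c : Fin 8 → Fin 8 → ℝ) (y : Pt) : ℝ :=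
  α * ∑ p, y 0 p ^ 2 + β * ∑ p, y 1 p ^ 2 + 2 * ∑ p, ∑ q, c p q * (y 0 p * y 1 q)

lemma fderiv_of_line (f : Pt → ℝ) (x u : Pt) (g c : ℝ) (hf : DifferentiableAt ℝ f x)
    (h : ∀ t : ℝ, f (x + t • u) = f x + t * g + t ^ 2 * c) : fderiv ℝ f x u = g := by
  have h1 : HasLineDerivAt ℝ f (fderiv ℝ f x u) x u := hf.hasFDerivAt.hasLineDerivAt u
  have h2 : HasLineDerivAt ℝ f g x u := by
    unfold HasLineDerivAt
    simp only [h]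
    have := (((hasDerivAt_id (0 : ℝ)).mul_const g).const_add (f x)).add
      (((hasDerivAt_id (0 : ℝ)).pow 2).mul_const c)
    simp only [id, one_mul, mul_one] at this
    convert this using 1; rotate_left
    · simp
    · rfl
  exact h1.unique h2

lemma pd_zero (α β : ℝ) (c : Fin 8 → Fin 8 → ℝ) (p : Fin 8) :
    pd 0 p (FF α β c) = fun x => 2 * α * x 0 p + 2 * ∑ q, c p q * x 1 q := by
  funext x
  apply fderiv_of_line _ _ _ _ α
  · unfold FF; fun_prop
  · intro t
    fin_cases p <;> simp [FF, uvec, Fin.sum_univ_eight, Pi.single_apply] <;> ring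

lemma pd_one (α β : ℝ) (c : Fin 8 → Fin 8 → ℝ) (q : Fin 8) :
    pd 1 q (FF α β c) = fun x => 2 * β * x 1 q + 2 * ∑ p, c p q * x 0 p := by
  funext x
  apply fderiv_of_line _ _ _ _ β
  · unfold FF; fun_prop
  · intro t
    fin_cases q <;> simp [FF, uvec, Fin.sum_univ_eight, Pi.single_apply] <;> ring

lemma pd_zero_zero (α β : ℝ) (c : Fin 8 → Fin 8 → ℝ) (p : Fin 8) (x : Pt) :
    pd 0 p (pd 0 p (FF α β c)) x = 2 * α := by
  rw [pd_zero]
  apply fderiv_of_line _ _ _ _ 0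
  · fun_prop
  · intro t
    simp [uvec]; ring

lemma pd_one_one (α β : ℝ) (c : Fin 8 → Fin 8 → ℝ) (p : Fin 8) (x : Pt) :
    pd 1 p (pd 1 p (FF α β c)) x = 2 * β := by
  rw [pd_one]
  apply fderiv_of_line _ _ _ _ 0
  · fun_prop
  · intro t
    simp [uvec]; ring

lemma pd_zero_one (α β : ℝ) (c : Fin 8 → Fin 8 → ℝ) (p q : Fin 8) (x : Pt) :
    pd 0 p (pd 1 q (FF α β c)) x = 2 * c p q := by
  rw [pd_one]
  apply fderiv_of_line _ _ _ _ 0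
  · fun_prop
  · intro t
    simp [uvec, Pi.single_apply, mul_add, Finset.sum_add_distrib]; ring

/-- Octonionic multiplication as a bilinear map. -/
def omulL : Oct →ₗ[ℝ] Oct →ₗ[ℝ] Oct :=
  LinearMap.mk₂ ℝ omul
    (by intro a b c; ext1 <;> simp only [omul, Prod.fst_add, Prod.snd_add] <;> noncomm_ring)
    (by intro r a b; simp [omul, smul_sub])
    (by intro a b c
        ext1 <;> simp only [omul, Prod.fst_add, Prod.snd_add, star_add] <;> noncomm_ring)
    (by intro r a b; simp [omul, smul_sub])

/-- Octonionic conjugation as a linear map. -/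
def oconjL : Oct →ₗ[ℝ] Oct where
  toFun := oconj
  map_add' a b := by simp [oconj, add_comm]
  map_smul' r a := by simp [oconj]

/-- The real part as a linear map. -/
def oReL : Oct →ₗ[ℝ] ℝ where
  toFun := oRe
  map_add' a b := by simp [oRe]
  map_smul' r a := by simp [oRe]

@[simp] lemma qI_re : qI.re = 0 := rfl
@[simp] lemma qI_imI : qI.imI = 1 := rfl
@[simp] lemma qI_imJ : qI.imJ = 0 := rfl
@[simp] lemma qI_imK : qI.imK = 0 := rfl
@[simp] lemma qJ_re : qJ.re = 0 := rfl
@[simp] lemma qJ_imI : qJ.imI = 0 := rfl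
@[simp] lemma qJ_imJ : qJ.imJ = 1 := rfl
@[simp] lemma qJ_imK : qJ.imK = 0 := rfl
@[simp] lemma qK_re : qK.re = 0 := rfl
@[simp] lemma qK_imI : qK.imI = 0 := rfl
@[simp] lemma qK_imJ : qK.imJ = 0 := rfl
@[simp] lemma qK_imK : qK.imK = 1 := rfl

lemma onSq_sum (s : Fin 8 → ℝ) : onSq (∑ p, s p • e p) = ∑ p, s p ^ 2 := by
  simp [onSq, oRe, omul, oconj, e, Fin.sum_univ_eight]
  ring

lemma mixed_sum (a : Oct) (s t : Fin 8 → ℝ) :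
    oRe (omul (oconj (∑ p, s p • e p)) (omul a (∑ q, t q • e q))) =
      ∑ p, ∑ q, cf a p q * (s p * t q) := by
  change oReL (omulL (oconjL (∑ p, s p • e p)) (omulL a (∑ q, t q • e q))) =
    ∑ p, ∑ q, oReL (omulL (oconjL (e p)) (omulL a (e q))) * (s p * t q)
  simp only [map_sum, map_smul, LinearMap.sum_apply, LinearMap.smul_apply, smul_eq_mul,
    Finset.mul_sum]
  rw [Finset.sum_comm]
  refine Finset.sum_congr rfl fun p _ => Finset.sum_congr rfl fun q _ => ?_
  ring

lemma qform_eq (A : Herm) : (fun y => qform A (toO2 y)) = FF A.1 A.2.1 (cf A.2.2) := by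
  funext y
  simp only [qform, FF, toO2, onSq_sum, mixed_sum]

lemma expand (w : Oct) : ∑ p, oRe (omul (oconj (e p)) w) • e p = w := by
  ext <;> simp [oRe, omul, oconj, e, Fin.sum_univ_eight]

lemma cancel (a : Oct) (q : Fin 8) : omul (omul a (e q)) (oconj (e q)) = a := by
  fin_cases q <;> ext <;> simp [omul, oconj, e]

lemma col_sum (a : Oct) (q : Fin 8) :
    ∑ p, (2 * cf a p q) • omul (e p) (oconj (e q)) = (2 : ℝ) • a := by
  have h : omulL (∑ p, cf a p q • e p) (oconj (e q)) = a := by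
    have h1 : ∑ p, cf a p q • e p = omul a (e q) := expand _
    rw [h1]
    exact cancel a q
  simp only [map_sum, map_smul, LinearMap.sum_apply, LinearMap.smul_apply] at h
  simp only [mul_smul, ← Finset.smul_sum]
  exact congrArg _ h

lemma final_sum (a : Oct) :
    ∑ p, ∑ q, (2 * cf a p q) • omul (e p) (oconj (e q)) = (16 : ℝ) • a := by
  rw [Finset.sum_comm]
  simp only [col_sum]
  simp only [Fin.sum_univ_eight, ← add_smul]
  norm_num

/-- Lemma 5.3 (θ∘j = Id): for an octonionic Hermitian matrix A = (α, β, q), the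
octonionic Hessian of the quadratic form b(ξ) = Re(ξ*Aξ) on ℝ¹⁶ ≅ 𝕆² is constant,
equal to 16·A: Δ₁b ≡ 16α, Δ₂b ≡ 16β and b_{1̄2} ≡ 16q. -/
theorem hess_of_qform (A : Herm) (x : Pt) :
    lap 0 (fun y => qform A (toO2 y)) x = 16 * A.1 ∧
    lap 1 (fun y => qform A (toO2 y)) x = 16 * A.2.1 ∧
    hessEntry (fun y => qform A (toO2 y)) 0 1 x = (16 : ℝ) • A.2.2 := by
  rw [qform_eq]
  refine ⟨?_, ?_, ?_⟩
  · simp only [lap, pd_zero_zero, Fin.sum_univ_eight]; ring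
  · simp only [lap, pd_one_one, Fin.sum_univ_eight]; ring
  · simp only [hessEntry, pd_zero_one]
    exact final_sum A.2.2
end
end

section
/- Let A and B be positive definite octonionic Hermitian 2×2 matrices. Then tr(A⁻¹·(A − B)) ≤ (2/√(det A))·(√(det A) − √(det B)), where A⁻¹ := (1/det A)·adj(A) (note det A > 0 and det B > 0). (Lemma 16.5.) -/
noncomputable section

open scoped Quaternion

/-- Embedding of ℝ into the octonions. -/
def oR (r : ℝ) : Oct := ((r : ℍ[ℝ]), 0)

/-- The 2×2 octonionic matrix [[α, q],[q̄, β]] attached to a Hermitian triple. -/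
def hermToMat (A : Herm) : Omat := ![![oR A.1, A.2.2], ![oconj A.2.2, oR A.2.1]]

/-- The 2×2 identity matrix. -/
def idMat : Omat := ![![oR 1, 0], ![0, oR 1]]

/-- The adjugate adj(A) = (β, α, −q) of an octonionic Hermitian matrix A = (α, β, q). -/
def adjH (A : Herm) : Herm := (A.2.1, A.1, -A.2.2)

/-- The real trace tr(X) = Re(X₁₁) + Re(X₂₂) of a 2×2 octonionic matrix. -/
def otr (X : Omat) : ℝ := oRe (X 0 0) + oRe (X 1 1)

/-- The inverse A⁻¹ = (1/det A)·adj(A) of an octonionic Hermitian matrix. -/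
def invH (A : Herm) : Herm := (detH A)⁻¹ • adjH A

/-- Explicit coordinates of the squared norm. -/
theorem onSq_eq_s15 (p : Oct) : onSq p = p.1.re^2 + p.1.imI^2 + p.1.imJ^2 + p.1.imK^2
    + p.2.re^2 + p.2.imI^2 + p.2.imJ^2 + p.2.imK^2 := by
  simp [onSq, oRe, omul, oconj]
  ring

theorem posDefH_facts (A : Herm) (hA : PosDefH A) : 0 < A.1 ∧ 0 < detH A := by
  obtain ⟨α, β, q⟩ := A
  have h1 : 0 < α := by
    have := hA (oR 1, 0) (by
      intro h
      have := congrArg (fun x : Oct × Oct => x.1.1.re) h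
      simp [oR] at this)
    simpa [qform, onSq, oRe, omul, oconj, oR] using this
  refine ⟨h1, ?_⟩
  have h2 := hA (-q, oR α) (by
      intro h
      have := congrArg (fun x : Oct × Oct => x.2.1.re) h
      simp [oR] at this
      exact h1.ne' this)
  have h3 : qform (α, β, q) (-q, oR α) = α * detH (α, β, q) := by
    simp [qform, detH, onSq, oRe, omul, oconj, oR]
    ring
  rw [h3] at h2
  exact (mul_pos_iff_of_pos_left h1).1 h2

theorem key_ineq (A B : Herm) (hA : 0 < A.1) (hB : 0 < B.1) (dA : 0 < detH A) (dB : 0 < detH B)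
    (m : ℝ) (hm : onSq (B.1 • A.2.2 - A.1 • B.2.2) =
      B.1^2 * onSq A.2.2 + A.1^2 * onSq B.2.2 - 2 * A.1 * B.1 * m) :
    2 * (Real.sqrt (detH A) * Real.sqrt (detH B)) ≤ A.2.1 * B.1 + A.1 * B.2.1 - 2 * m := by
  have h0 : 0 ≤ onSq (B.1 • A.2.2 - A.1 • B.2.2) := by
    rw [onSq_eq_s15]; positivity
  rw [hm] at h0
  have sA := Real.sq_sqrt dA.le
  have sB := Real.sq_sqrt dB.le
  set s := Real.sqrt (detH A)
  set t := Real.sqrt (detH B)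
  unfold detH at sA sB
  have hp : 0 < A.1 * B.1 := mul_pos hA hB
  refine le_of_mul_le_mul_left ?_ hp
  have e1 : onSq A.2.2 = A.1 * A.2.1 - s^2 := by linarith
  have e2 : onSq B.2.2 = B.1 * B.2.1 - t^2 := by linarith
  rw [e1, e2] at h0
  nlinarith [sq_nonneg (B.1 * s - A.1 * t)]

/-- Lemma 16.5: for positive definite octonionic Hermitian matrices A, B,
tr(A⁻¹(A−B)) ≤ (2/√det A)·(√det A − √det B). -/
theorem trace_inequality (A B : Herm) (hA : PosDefH A) (hB : PosDefH B) :
    otr (matMul (hermToMat (invH A)) (hermToMat (A - B)))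
      ≤ (2 / Real.sqrt (detH A)) * (Real.sqrt (detH A) - Real.sqrt (detH B)) := by
  obtain ⟨a1, dA⟩ := posDefH_facts A hA
  obtain ⟨b1, dB⟩ := posDefH_facts B hB
  obtain ⟨α, β, q⟩ := A
  obtain ⟨a, b, p⟩ := B
  have key := key_ineq (α, β, q) (a, b, p) a1 b1 dA dB
    (q.1.re * p.1.re + q.1.imI * p.1.imI + q.1.imJ * p.1.imJ + q.1.imK * p.1.imK
    + q.2.re * p.2.re + q.2.imI * p.2.imI + q.2.imJ * p.2.imJ + q.2.imK * p.2.imK) (by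
      simp [onSq_eq_s15]
      ring)
  have htr : otr (matMul (hermToMat (invH (α, β, q))) (hermToMat ((α, β, q) - (a, b, p))))
      = (detH (α, β, q))⁻¹ * (2 * detH (α, β, q) - (β * a + α * b - 2 *
    (q.1.re * p.1.re + q.1.imI * p.1.imI + q.1.imJ * p.1.imJ + q.1.imK * p.1.imK
    + q.2.re * p.2.re + q.2.imI * p.2.imI + q.2.imJ * p.2.imJ + q.2.imK * p.2.imK))) := by
    unfold invH
    generalize (detH (α, β, q))⁻¹ = d
    simp [otr, matMul, hermToMat, adjH, detH, onSq_eq_s15, oRe, omul, oconj, oR]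
    ring
  rw [htr]
  have hs : 0 < Real.sqrt (detH (α, β, q)) := Real.sqrt_pos.2 dA
  have sA := Real.sq_sqrt dA.le
  have hr : (2 / Real.sqrt (detH (α, β, q))) *
      (Real.sqrt (detH (α, β, q)) - Real.sqrt (detH (a, b, p)))
      = (detH (α, β, q))⁻¹ * (2 * detH (α, β, q) -
        2 * (Real.sqrt (detH (α, β, q)) * Real.sqrt (detH (a, b, p)))) := by
    generalize Real.sqrt (detH (α, β, q)) = s at *
    rw [← sA]
    field_simp
  rw [hr]
  refine mul_le_mul_of_nonneg_left ?_ (inv_nonneg.2 dA.le)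
  simp only at key
  linarith
end
end
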